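/- (Lemma 2.4) Let 1 < γ < 3 and let (τ,u) be a C¹ solution of the p-system on ℝ × [0,T) with initial data (τ₀,u₀) satisfying Assumption A. Then for all x ∈ ℝ and t ∈ [0,T), τ(x,t) ≤ [ τ₀(x)^{(3−γ)/4} + K₀ (Y+Q) t ]^{4/(3−γ)}, where K₀ = ((3−γ)/8) (K₁γ)^{−1/4} √K_c (a constant depending only on γ and K₁). -/

import Mathlib

open Real Set MeasureTheory Filter

/-- `η(τ) = (2√(K₁γ)/(γ−1)) τ^{−(γ−1)/2}`. -/
noncomputable def etaP (K₁ γ τv : ℝ) : ℝ :=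
  2 * Real.sqrt (K₁ * γ) / (γ - 1) * τv ^ (-(γ - 1) / 2)

/-- Lagrangian sound speed `c(τ) = √(K₁γ) τ^{−(γ+1)/2}`. -/
noncomputable def soundP (K₁ γ τv : ℝ) : ℝ :=
  Real.sqrt (K₁ * γ) * τv ^ (-(γ + 1) / 2)

/-- `K_τ = (2√(K₁γ)/(γ−1))^{2/(γ−1)}`. -/
noncomputable def KtauP (K₁ γ : ℝ) : ℝ :=
  (2 * Real.sqrt (K₁ * γ) / (γ - 1)) ^ (2 / (γ - 1))

/-- `K_c = √(K₁γ) K_τ^{−(γ+1)/2}`. -/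
noncomputable def KcP (K₁ γ : ℝ) : ℝ :=
  Real.sqrt (K₁ * γ) * KtauP K₁ γ ^ (-(γ + 1) / 2)

/-- A `Cᵏ` solution `(τ, u)` of the p-system with `γ`-law pressure `p = K₁ τ^{−γ}`
on `ℝ × I`:  `τ > 0`, both components are `Cᵏ`, and the equations
`τ_t − u_x = 0`, `u_t + (p(τ))_x = 0` hold pointwise. -/
def PSysSol (K₁ γ : ℝ) (I : Set ℝ) (k : ℕ) (τ u : ℝ → ℝ → ℝ) : Prop :=
  (∀ x t, t ∈ I → 0 < τ x t) ∧
  ContDiffOn ℝ k (fun p : ℝ × ℝ => τ p.1 p.2) (Set.univ ×ˢ I) ∧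
  ContDiffOn ℝ k (fun p : ℝ × ℝ => u p.1 p.2) (Set.univ ×ˢ I) ∧
  (∀ x : ℝ, ∀ t ∈ I, deriv (fun t' => τ x t') t - deriv (fun x' => u x' t) x = 0) ∧
  (∀ x : ℝ, ∀ t ∈ I, deriv (fun t' => u x t') t + deriv (fun x' => K₁ * τ x' t ^ (-γ)) x = 0)

/-- Assumption A: `τ₀, u₀` are `C¹` with `‖τ₀‖_{C¹} + ‖u₀‖_{C¹} ≤ M₁` and `τ₀ ≥ M₂ > 0`. -/
def AssumptionA (M₁ M₂ : ℝ) (τ₀ u₀ : ℝ → ℝ) : Prop :=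
  ContDiff ℝ 1 τ₀ ∧ ContDiff ℝ 1 u₀ ∧ 0 < M₁ ∧ 0 < M₂ ∧
  (∀ x, |τ₀ x| + |deriv τ₀ x| + |u₀ x| + |deriv u₀ x| ≤ M₁) ∧
  (∀ x, M₂ ≤ τ₀ x)


theorem ps_max (K : Set (ℝ × ℝ)) (hK : IsCompact K) (F : ℝ × ℝ → ℝ) (hF : ContinuousOn F K)
    (P0 : ℝ × ℝ → Prop) (p0 : ℝ × ℝ) (hp0 : p0 ∈ K)
    (h : ∀ p ∈ K, F p0 ≤ F p → P0 p ∨ ∃ (v : ℝ × ℝ) (F' : ℝ × ℝ →L[ℝ] ℝ), HasFDerivAt F F' p ∧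
      F' v < 0 ∧ ∃ d > 0, ∀ δ : ℝ, 0 < δ → δ ≤ d → p - δ • v ∈ K) :
    ∃ p ∈ K, P0 p ∧ F p0 ≤ F p := by
  obtain ⟨p, hp, hmax⟩ := hK.exists_isMaxOn ⟨p0, hp0⟩ hF
  refine ⟨p, hp, ?_, hmax hp0⟩
  rcases h p hp (hmax hp0) with h1 | ⟨v, F', hd, hneg, d, hd0, hin⟩
  · exact h1
  exfalso
  have hl : HasDerivAt (fun δ : ℝ => p - δ • v) (-v) 0 := by
    have := ((hasDerivAt_id (0:ℝ)).smul_const v).const_sub p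
    simpa using this
  have hg : HasDerivAt (fun δ : ℝ => F (p - δ • v)) (F' (-v)) 0 := by
    have hd' : HasFDerivAt F F' (p - (0:ℝ) • v) := by simpa using hd
    exact hd'.comp_hasDerivAt (0:ℝ) hl
  have ht := hg.tendsto_slope_zero_right
  have hpos : 0 < F' (-v) := by simpa using hneg
  have e1 := ht.eventually (lt_mem_nhds hpos)
  have e2 : ∀ᶠ δ : ℝ in nhdsWithin 0 (Ioi 0), δ ∈ Ioc 0 d := Ioc_mem_nhdsGT hd0
  obtain ⟨δ, h1, h2⟩ := (e1.and e2).exists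
  have h3 : F (p - δ • v) ≤ F p := hmax (hin δ h2.1 h2.2)
  simp only [zero_add, zero_smul, sub_zero, smul_eq_mul] at h1
  have h4 : δ⁻¹ * (F (p - δ • v) - F p) ≤ 0 :=
    mul_nonpos_of_nonneg_of_nonpos (inv_nonneg.2 h2.1.le) (by linarith)
  linarith

def psD (T : ℝ) : Set (ℝ × ℝ) := Set.univ ×ˢ Set.Ico 0 T

noncomputable def psc (κ m : ℝ) (S R : ℝ × ℝ → ℝ) (p : ℝ × ℝ) : ℝ := κ * (((S p - R p) / 2) ^ m) ^ 2

structure PsSys (κ m T : ℝ) (S R Sx Rx : ℝ × ℝ → ℝ) : Prop where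
  kpos : 0 < κ
  mpos : 0 < m
  pos : ∀ p ∈ psD T, R p < S p
  cS : ContinuousOn S (psD T)
  cR : ContinuousOn R (psD T)
  cSx : ContinuousOn Sx (psD T)
  cRx : ContinuousOn Rx (psD T)
  dSx : ∀ x, ∀ t ∈ Ico 0 T, HasDerivAt (fun x' => S (x', t)) (Sx (x, t)) x
  dRx : ∀ x, ∀ t ∈ Ico 0 T, HasDerivAt (fun x' => R (x', t)) (Rx (x, t)) x
  dS : ∀ p : ℝ × ℝ, 0 < p.2 → p.2 < T → HasFDerivAt S
    (Sx p • (ContinuousLinearMap.fst ℝ ℝ ℝ - psc κ m S R p • ContinuousLinearMap.snd ℝ ℝ ℝ)) p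
  dR : ∀ p : ℝ × ℝ, 0 < p.2 → p.2 < T → HasFDerivAt R
    (Rx p • (ContinuousLinearMap.fst ℝ ℝ ℝ + psc κ m S R p • ContinuousLinearMap.snd ℝ ℝ ℝ)) p
  bS : ∃ M, ∀ x, |S (x, 0)| ≤ M
  bR : ∃ M, ∀ x, |R (x, 0)| ≤ M

theorem PsSys.reflect {κ m T : ℝ} {S R Sx Rx : ℝ × ℝ → ℝ} (h : PsSys κ m T S R Sx Rx) :
    PsSys κ m T (fun p => - R (-p.1, p.2)) (fun p => - S (-p.1, p.2))
      (fun p => Rx (-p.1, p.2)) (fun p => Sx (-p.1, p.2)) := by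
  have hcont : ContinuousOn (fun p : ℝ × ℝ => (-p.1, p.2)) (psD T) := by fun_prop
  have hm : MapsTo (fun p : ℝ × ℝ => (-p.1, p.2)) (psD T) (psD T) := by
    intro p hp; exact ⟨trivial, hp.2⟩
  have hl : ∀ p : ℝ × ℝ, HasFDerivAt (fun p : ℝ × ℝ => (-p.1, p.2))
      ((-ContinuousLinearMap.fst ℝ ℝ ℝ).prod (ContinuousLinearMap.snd ℝ ℝ ℝ)) p := by
    intro p
    exact (hasFDerivAt_fst.neg).prodMk hasFDerivAt_snd
  have hc : ∀ p : ℝ × ℝ, psc κ m (fun p => - R (-p.1, p.2)) (fun p => - S (-p.1, p.2)) p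
      = psc κ m S R (-p.1, p.2) := by
    intro p; simp only [psc]; congr 4; ring
  refine ⟨h.kpos, h.mpos, ?_, (h.cR.comp hcont hm).neg, (h.cS.comp hcont hm).neg,
    h.cRx.comp hcont hm, h.cSx.comp hcont hm, ?_, ?_, ?_, ?_, ?_, ?_⟩
  · intro p hp
    have := h.pos _ (hm hp)
    simpa using this
  · intro x t ht
    exact ((h.dRx (-x) t ht).comp x (hasDerivAt_neg x)).neg.congr_deriv (by simp)
  · intro x t ht
    exact ((h.dSx (-x) t ht).comp x (hasDerivAt_neg x)).neg.congr_deriv (by simp)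
  · intro p h1 h2
    rw [hc]
    refine ((h.dR (-p.1, p.2) h1 h2).comp p (hl p)).neg.congr_fderiv ?_
    ext <;> simp
  · intro p h1 h2
    rw [hc]
    refine ((h.dS (-p.1, p.2) h1 h2).comp p (hl p)).neg.congr_fderiv ?_
    ext <;> simp
  · obtain ⟨M, hM⟩ := h.bR
    exact ⟨M, fun x => by simpa using hM (-x)⟩
  · obtain ⟨M, hM⟩ := h.bS
    exact ⟨M, fun x => by simpa using hM (-x)⟩

def psTri (x0 t0 L : ℝ) : Set (ℝ × ℝ) :=
  {p | 0 ≤ p.2 ∧ p.2 ≤ t0 ∧ x0 - L * (t0 - p.2) ≤ p.1 ∧ p.1 ≤ x0}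

theorem psTri_compact (x0 t0 L : ℝ) (hL : 0 ≤ L) : IsCompact (psTri x0 t0 L) := by
  have hc : IsCompact (Icc (x0 - L * t0) x0 ×ˢ Icc (0:ℝ) t0) := isCompact_Icc.prod isCompact_Icc
  refine hc.of_isClosed_subset ?_ ?_
  · simp only [psTri, ofPred_and]
    exact (isClosed_le (by fun_prop) (by fun_prop)).inter ((isClosed_le (by fun_prop) (by fun_prop)).inter
      ((isClosed_le (by fun_prop) (by fun_prop)).inter (isClosed_le (by fun_prop) (by fun_prop))))
  · rintro ⟨x, t⟩ ⟨h1, h2, h3, h4⟩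
    simp only at h1 h2 h3 h4
    refine ⟨⟨?_, h4⟩, h1, h2⟩
    simp only
    nlinarith

theorem PsSys.c_nonneg {κ m T : ℝ} {S R Sx Rx : ℝ × ℝ → ℝ} (h : PsSys κ m T S R Sx Rx) (p : ℝ × ℝ) :
    0 ≤ psc κ m S R p := mul_nonneg h.kpos.le (sq_nonneg _)

theorem psTri_back {x0 t0 L c : ℝ} {p : ℝ × ℝ} (hp : p ∈ psTri x0 t0 L) (hc : 0 ≤ c) (hcL : c ≤ L)
    (δ : ℝ) (h0 : 0 < δ) (h1 : δ ≤ p.2) : p - δ • ((c, 1) : ℝ × ℝ) ∈ psTri x0 t0 L := by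
  obtain ⟨x, t⟩ := p
  obtain ⟨a1, a2, a3, a4⟩ := hp
  simp only at a1 a2 a3 a4 h1
  simp only [psTri, Prod.smul_mk, Prod.mk_sub_mk, smul_eq_mul, mem_ofPred_eq, mul_one]
  refine ⟨by linarith, by linarith, ?_, ?_⟩
  · nlinarith
  · nlinarith

theorem PsSys.R_low {κ m T : ℝ} {S R Sx Rx : ℝ × ℝ → ℝ} (h : PsSys κ m T S R Sx Rx)
    (x0 t0 : ℝ) (ht0 : t0 ∈ Ico 0 T) :
    ∃ M1, ∀ x ≤ x0, ∀ t ∈ Icc 0 t0, - R (x, t) ≤ M1 := by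
  obtain ⟨M, hM⟩ := h.bR
  have hco : ContinuousOn (fun t => -R (x0, t)) (Icc 0 t0) := by
    refine (h.cR.comp (f := fun t => (x0, t)) (by fun_prop) ?_).neg
    intro t ht
    exact ⟨trivial, ht.1, ht.2.trans_lt ht0.2⟩
  obtain ⟨M2, hM2⟩ := (isCompact_Icc.image_of_continuousOn hco).bddAbove
  refine ⟨max M M2 + t0, fun x hx t ht => ?_⟩
  have hsub : Icc x x0 ×ˢ Icc (0:ℝ) t0 ⊆ psD T := fun p hp => ⟨trivial, hp.2.1, hp.2.2.trans_lt ht0.2⟩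
  have := ps_max (Icc x x0 ×ˢ Icc (0:ℝ) t0) (isCompact_Icc.prod isCompact_Icc)
    (fun p => - R p - p.2) ((h.cR.mono hsub).neg.sub (by fun_prop))
    (fun p => p.2 = 0 ∨ p.1 = x0) (x, t) ⟨⟨le_rfl, hx⟩, ht⟩ ?_
  · obtain ⟨⟨x', t'⟩, hp, hP, hle⟩ := this
    simp only at hP hle
    have := ht.2
    have h3 : -R (x', t') ≤ max M M2 := by
      rcases hP with rfl | rfl
      · exact le_max_of_le_left ((neg_le_abs _).trans (hM x'))
      · exact le_max_of_le_right (hM2 ⟨t', hp.2, rfl⟩)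
    have := hp.2.1
    simp only at this
    linarith
  · rintro ⟨x', t'⟩ ⟨⟨a1, a2⟩, a3, a4⟩ -
    simp only at a1 a2 a3 a4 ⊢
    rcases a3.eq_or_lt with h0 | h0
    · left; left; exact h0.symm
    rcases a2.eq_or_lt with h1 | h1
    · left; right; exact h1
    right
    set c := psc κ m S R (x', t') with hc
    have hc0 : 0 ≤ c := h.c_nonneg _
    refine ⟨(-c, 1), _, ((h.dR (x', t') h0 (a4.trans_lt ht0.2)).neg.sub hasFDerivAt_snd), ?_,
      min t' ((x0 - x') / (c + 1)), lt_min h0 (div_pos (by linarith) (by linarith)), ?_⟩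
    · simp [← hc]
    · intro δ hδ hδ'
      have b1 := hδ'.trans (min_le_left _ _)
      have b2 := hδ'.trans (min_le_right _ _)
      rw [le_div_iff₀ (by linarith)] at b2
      simp only [Prod.smul_mk, Prod.mk_sub_mk, smul_eq_mul, mem_prod, mem_Icc]
      refine ⟨⟨?_, ?_⟩, ?_, ?_⟩ <;> nlinarith

theorem PsSys.S_up {κ m T : ℝ} {S R Sx Rx : ℝ × ℝ → ℝ} (h : PsSys κ m T S R Sx Rx) :
    ∃ M, ∀ p ∈ psD T, S p ≤ M := by
  obtain ⟨M, hM⟩ := h.bS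
  refine ⟨M + 1, ?_⟩
  rintro ⟨x0, t0⟩ ⟨-, ht0⟩
  simp only at ht0
  obtain ⟨M1, hM1⟩ := h.R_low x0 t0 ht0
  set S1 := S (x0, t0) with hS1
  set L := κ * (((S1 + 1 + M1) / 2) ^ m) ^ 2 with hL
  have hL0 : 0 ≤ L := mul_nonneg h.kpos.le (sq_nonneg _)
  set ε := 1 / (t0 + 1) with hε
  have ht00 := ht0.1
  have hε0 : 0 < ε := by positivity
  have hεt : ε * t0 ≤ 1 := by
    rw [hε, div_mul_eq_mul_div, div_le_one (by linarith)]; linarith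
  have hsub : psTri x0 t0 L ⊆ psD T := fun p hp => ⟨trivial, hp.1, hp.2.1.trans_lt ht0.2⟩
  have := ps_max (psTri x0 t0 L) (psTri_compact _ _ _ hL0)
    (fun p => - (S p - S1) ^ 2 - ε * p.2)
    ((((h.cS.mono hsub).sub continuousOn_const).pow 2).neg.sub (by fun_prop))
    (fun p => p.2 = 0) (x0, t0) ⟨ht00, le_rfl, by simp, le_rfl⟩ ?_
  · obtain ⟨⟨x', t'⟩, hp, hP, hle⟩ := this
    simp only at hP hle
    subst hP
    rw [← hS1] at hle
    have h1 := (le_abs_self _).trans (hM x')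
    nlinarith
  · rintro ⟨x', t'⟩ hp hle
    have hp' := hp
    obtain ⟨a1, a2, a3, a4⟩ := hp'
    simp only at a1 a2 a3 a4 hle ⊢
    rw [← hS1] at hle
    rcases a1.eq_or_lt with h0 | h0
    · left; exact h0.symm
    right
    have hcL : psc κ m S R (x', t') ≤ L := by
      have h1 : S (x', t') ≤ S1 + 1 := by nlinarith
      have h2 := hM1 x' a4 t' ⟨a1, a2⟩
      have h3 := h.pos _ (hsub hp)
      have hk := h.kpos
      have hm := h.mpos
      rw [hL, psc]
      have : 0 ≤ (S (x', t') - R (x', t')) / 2 := by linarith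
      gcongr
      linarith
    refine ⟨(psc κ m S R (x', t'), 1), _,
      ((((h.dS (x', t') h0 (a2.trans_lt ht0.2)).sub_const S1).pow 2).neg.sub
        (hasFDerivAt_snd.const_mul ε)), ?_, t', h0, ?_⟩
    · simp [hε0]
    · intro δ hδ hδ'
      exact psTri_back hp (h.c_nonneg _) hcL δ hδ hδ'

theorem PsSys.c_up {κ m T : ℝ} {S R Sx Rx : ℝ × ℝ → ℝ} (h : PsSys κ m T S R Sx Rx) :
    ∃ L, 0 ≤ L ∧ ∀ p ∈ psD T, psc κ m S R p ≤ L := by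
  obtain ⟨M, hM⟩ := h.S_up
  obtain ⟨N, hN⟩ := h.reflect.S_up
  refine ⟨κ * (((M + N) / 2) ^ m) ^ 2, mul_nonneg h.kpos.le (sq_nonneg _), fun p hp => ?_⟩
  have h1 := hM p hp
  have h2 := hN (-p.1, p.2) ⟨trivial, hp.2⟩
  simp only [neg_neg] at h2
  have h3 := h.pos p hp
  have hk := h.kpos
  have hm := h.mpos
  rw [psc]
  have : 0 ≤ (S p - R p) / 2 := by linarith
  gcongr
  change -R p ≤ N at h2
  linarith

theorem ps_unif (a b t0 : ℝ) (E : ℝ × ℝ × ℝ × ℝ × ℝ → ℝ)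
    (hE : ContinuousOn E (Icc a b ×ˢ Icc 0 t0 ×ˢ Icc a b ×ˢ Icc a b ×ˢ Icc a b)) (ε : ℝ) (hε : 0 < ε) :
    ∃ h0 > 0, ∀ x ∈ Icc a b, ∀ t ∈ Icc 0 t0, ∀ ξ₁ ∈ Icc a b, ∀ ξ₂ ∈ Icc a b, ∀ ξ₃ ∈ Icc a b,
      |ξ₁ - x| < h0 → |ξ₂ - x| < h0 → |ξ₃ - x| < h0 →
      |E (x, t, ξ₁, ξ₂, ξ₃) - E (x, t, x, x, x)| < ε := by
  have hc : IsCompact (Icc a b ×ˢ Icc 0 t0 ×ˢ Icc a b ×ˢ Icc a b ×ˢ Icc a b) :=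
    isCompact_Icc.prod (isCompact_Icc.prod (isCompact_Icc.prod (isCompact_Icc.prod isCompact_Icc)))
  have hu := hc.uniformContinuousOn_of_continuous hE
  rw [Metric.uniformContinuousOn_iff] at hu
  obtain ⟨h0, h0p, hh⟩ := hu ε hε
  refine ⟨h0, h0p, fun x hx t ht ξ₁ h1 ξ₂ h2 ξ₃ h3 d1 d2 d3 => ?_⟩
  have := hh (x, t, ξ₁, ξ₂, ξ₃) ⟨hx, ht, h1, h2, h3⟩ (x, t, x, x, x) ⟨hx, ht, hx, hx, hx⟩ ?_
  · simpa [Real.dist_eq] using this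
  · simp [Prod.dist_eq, Real.dist_eq, d1, d2, d3]

theorem PsSys.y_bound {κ m T : ℝ} {S R Sx Rx : ℝ × ℝ → ℝ} (h : PsSys κ m T S R Sx Rx) (Y : ℝ)
    (hY : ∀ x, ((S (x, 0) - R (x, 0)) / 2) ^ m * Sx (x, 0) ≤ Y) :
    ∀ p ∈ psD T, ((S p - R p) / 2) ^ m * Sx p ≤ Y := by
  rintro ⟨x0, t0⟩ ⟨-, ht0⟩
  simp only at ht0
  have ht00 := ht0.1
  obtain ⟨L, hL0, hL⟩ := h.c_up
  have hk := h.kpos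
  have hm := h.mpos
  have hηpos : ∀ p ∈ psD T, 0 < (S p - R p) / 2 := fun p hp => by
    have := h.pos p hp; linarith
  have cη : ContinuousOn (fun p => (S p - R p) / 2) (psD T) := (h.cS.sub h.cR).div_const 2
  obtain ⟨b, hb⟩ : ∃ b : ℝ × ℝ → ℝ, b = fun p => ((S p - R p) / 2) ^ m := ⟨_, rfl⟩
  obtain ⟨b', hb'⟩ : ∃ b' : ℝ × ℝ → ℝ, b' = fun p => m * ((S p - R p) / 2) ^ (m - 1) := ⟨_, rfl⟩
  have cb : ContinuousOn b (psD T) := by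
    rw [hb]; exact cη.rpow_const fun p hp => Or.inl (hηpos p hp).ne'
  have cb' : ContinuousOn b' (psD T) := by
    rw [hb']; exact continuousOn_const.mul (cη.rpow_const fun p hp => Or.inl (hηpos p hp).ne')
  have hbn : ∀ p ∈ psD T, 0 ≤ b' p := fun p hp => by
    rw [hb']; exact mul_nonneg hm.le (rpow_nonneg (hηpos p hp).le _)
  have hpsc : ∀ p, psc κ m S R p = κ * b p ^ 2 := fun p => by rw [hb, psc]
  obtain ⟨Cx, hCx⟩ : ∃ Cx : ℝ × ℝ → ℝ, Cx = fun p => κ * b p * b' p * (Sx p - Rx p) := ⟨_, rfl⟩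
  have cCx : ContinuousOn Cx (psD T) := by
    rw [hCx]; exact ((continuousOn_const.mul cb).mul cb').mul (h.cSx.sub h.cRx)
  have dCx : ∀ x, ∀ t ∈ Ico 0 T, HasDerivAt (fun x' => κ * b (x', t) ^ 2) (Cx (x, t)) x := by
    intro x t ht
    have h1 := (((h.dSx x t ht).sub (h.dRx x t ht)).div_const 2).rpow_const (p := m)
      (Or.inl (hηpos (x, t) ⟨trivial, ht⟩).ne')
    have h2 := (h1.pow 2).const_mul κ
    rw [hb]
    refine h2.congr_deriv ?_
    simp only [hCx, hb, hb']
    simp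
    ring
  have db : ∀ p : ℝ × ℝ, 0 < p.2 → p.2 < T → HasFDerivAt b
      (b' p • (2⁻¹ : ℝ) • (Sx p • (ContinuousLinearMap.fst ℝ ℝ ℝ - psc κ m S R p • ContinuousLinearMap.snd ℝ ℝ ℝ)
        - Rx p • (ContinuousLinearMap.fst ℝ ℝ ℝ + psc κ m S R p • ContinuousLinearMap.snd ℝ ℝ ℝ))) p := by
    intro p h1 h2
    have h3 := (((h.dS p h1 h2).sub (h.dR p h1 h2)).mul_const (2⁻¹ : ℝ)).rpow_const (p := m)
      (Or.inl (by simpa [div_eq_mul_inv] using (hηpos p ⟨trivial, h1.le, h2⟩).ne'))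
    rw [hb, hb']
    simp only [div_eq_mul_inv]
    exact h3
  -- error functions
  obtain ⟨E, hE⟩ : ∃ E : ℝ × ℝ × ℝ × ℝ × ℝ → ℝ, E = fun z =>
      - b' (z.1, z.2.1) * (κ * b (z.1, z.2.1) ^ 2) * Rx (z.1, z.2.1) * Sx (z.2.2.1, z.2.1)
      - b (z.1, z.2.1) * Cx (z.2.2.2.1, z.2.1) * Sx (z.2.2.2.2, z.2.1) := ⟨_, rfl⟩
  obtain ⟨E2, hE2⟩ : ∃ E : ℝ × ℝ × ℝ × ℝ × ℝ → ℝ, E = fun z =>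
      b (z.1, z.2.1) * Sx (z.2.2.1, z.2.1) := ⟨_, rfl⟩
  set α := x0 - L * t0 with hα
  set β := x0 + 1 with hβ
  have key : ∀ (f : ℝ × ℝ → ℝ) (g : ℝ × ℝ × ℝ × ℝ × ℝ → ℝ), ContinuousOn f (psD T) → Continuous g →
      ContinuousOn (fun z : ℝ × ℝ × ℝ × ℝ × ℝ => f (g z, z.2.1))
        (Icc α β ×ˢ Icc 0 t0 ×ˢ Icc α β ×ˢ Icc α β ×ˢ Icc α β) := by
    intro f g hf hg
    refine hf.comp (f := fun z : ℝ × ℝ × ℝ × ℝ × ℝ => (g z, z.2.1)) (by fun_prop) ?_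
    intro z hz
    exact ⟨trivial, hz.2.1.1, hz.2.1.2.trans_lt ht0.2⟩
  have cE : ContinuousOn E (Icc α β ×ˢ Icc 0 t0 ×ˢ Icc α β ×ˢ Icc α β ×ˢ Icc α β) := by
    rw [hE]
    exact (((((key b' _ cb' (by fun_prop)).neg).mul
      (continuousOn_const.mul ((key b _ cb (by fun_prop)).pow 2))).mul
      (key Rx _ h.cRx (by fun_prop))).mul (key Sx _ h.cSx (by fun_prop))).sub
      (((key b _ cb (by fun_prop)).mul (key Cx _ cCx (by fun_prop))).mul
        (key Sx _ h.cSx (by fun_prop)))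
  have cE2 : ContinuousOn E2 (Icc α β ×ˢ Icc 0 t0 ×ˢ Icc α β ×ˢ Icc α β ×ˢ Icc α β) := by
    rw [hE2]
    exact (key b _ cb (by fun_prop)).mul (key Sx _ h.cSx (by fun_prop))
  suffices H : ∀ ε > 0, b (x0, t0) * Sx (x0, t0) ≤ Y + ε * (2 + 2 * t0) by
    have h1 : b (x0, t0) * Sx (x0, t0) ≤ Y := by
      refine le_of_forall_pos_le_add fun e he => ?_
      have := H (e / (2 + 2 * t0)) (by positivity)
      rwa [div_mul_cancel₀ _ (by positivity)] at this
    rw [hb] at h1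
    exact h1
  intro ε hε
  obtain ⟨d1, hd1, H1⟩ := ps_unif α β t0 E cE ε hε
  obtain ⟨d2, hd2, H2⟩ := ps_unif α β t0 E2 cE2 ε hε
  obtain ⟨d, hd0, hdd1, hdd2, hdd3⟩ : ∃ d > 0, d < d1 ∧ d < d2 ∧ d ≤ 1 := by
    refine ⟨min (min d1 d2 / 2) 1, by positivity, ?_, ?_, min_le_right _ _⟩
    · have : min d1 d2 ≤ d1 := min_le_left _ _
      have : min (min d1 d2 / 2) 1 ≤ min d1 d2 / 2 := min_le_left _ _
      have : 0 < min d1 d2 := lt_min hd1 hd2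
      linarith
    · have : min d1 d2 ≤ d2 := min_le_right _ _
      have : min (min d1 d2 / 2) 1 ≤ min d1 d2 / 2 := min_le_left _ _
      have : 0 < min d1 d2 := lt_min hd1 hd2
      linarith
  -- difference quotient as a value of the derivative
  have mv : ∀ (f fx : ℝ × ℝ → ℝ), (∀ x, ∀ t ∈ Ico 0 T, HasDerivAt (fun x' => f (x', t)) (fx (x, t)) x) →
      ∀ x, ∀ t ∈ Ico 0 T, ∃ ξ, x < ξ ∧ ξ < x + d ∧ f (x + d, t) - f (x, t) = d * fx (ξ, t) := by
    intro f fx hf x t ht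
    obtain ⟨ξ, hξ, he⟩ := exists_hasDerivAt_eq_slope (fun x' => f (x', t)) (fun x' => fx (x', t))
      (show x < x + d by linarith) (fun x' _ => (hf x' t ht).continuousAt.continuousWithinAt)
      (fun x' _ => hf x' t ht)
    refine ⟨ξ, hξ.1, hξ.2, ?_⟩
    rw [he, add_sub_cancel_left]; field_simp
  have hsub : psTri x0 t0 L ⊆ psD T := fun p hp => ⟨trivial, hp.1, hp.2.1.trans_lt ht0.2⟩
  have hx : ∀ p ∈ psTri x0 t0 L, α ≤ p.1 ∧ p.1 ≤ x0 := by
    rintro p ⟨a1, a2, a3, a4⟩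
    refine ⟨?_, a4⟩
    rw [hα]; nlinarith
  have hsh : MapsTo (fun p : ℝ × ℝ => (p.1 + d, p.2)) (psTri x0 t0 L) (psD T) :=
    fun p hp => ⟨trivial, (hsub hp).2⟩
  have q_est : ∀ p ∈ psTri x0 t0 L, |b p * ((S (p.1 + d, p.2) - S p) * d⁻¹) - b p * Sx p| < ε := by
    rintro ⟨x, t⟩ hp
    obtain ⟨ξ, h1, h2, h3⟩ := mv S Sx h.dSx x t (hsub hp).2
    have hxx := hx _ hp
    simp only at hxx ⊢
    have hmem : x ∈ Icc α β := ⟨hxx.1, by linarith⟩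
    have hmem2 : ξ ∈ Icc α β := ⟨by linarith [hxx.1], by linarith⟩
    have hs : |ξ - x| < d2 := by rw [abs_lt]; constructor <;> linarith
    have := H2 x hmem t ⟨hp.1, hp.2.1⟩ ξ hmem2 ξ hmem2 ξ hmem2 hs hs hs
    rw [hE2] at this
    rw [h3, mul_comm d, mul_assoc, mul_inv_cancel₀ hd0.ne', mul_one]
    exact this
  have := ps_max (psTri x0 t0 L) (psTri_compact _ _ _ hL0)
    (fun p => b p * ((S (p.1 + d, p.2) - S p) * d⁻¹) - (2 * ε) * p.2)
    (((cb.mono hsub).mul (((h.cS.comp (by fun_prop) hsh).sub (h.cS.mono hsub)).mul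
      continuousOn_const)).sub (by fun_prop))
    (fun p => p.2 = 0) (x0, t0) ⟨ht00, le_rfl, by simp, le_rfl⟩ ?_
  · obtain ⟨⟨x', t'⟩, hp, hP, hle⟩ := this
    simp only at hP hle
    subst hP
    have h1 := q_est _ hp
    have h2 := q_est (x0, t0) ⟨ht00, le_rfl, by simp, le_rfl⟩
    rw [abs_lt] at h1 h2
    have h3 := hY x'
    have h4 : b (x', 0) = ((S (x', 0) - R (x', 0)) / 2) ^ m := by rw [hb]
    rw [← h4] at h3
    simp only at h1 h2
    nlinarith
  · rintro ⟨x, t⟩ hp -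
    have hpD := hsub hp
    have hxx := hx _ hp
    have hp' := hp
    obtain ⟨a1, a2, a3, a4⟩ := hp'
    simp only at a1 a2 a3 a4 hxx ⊢
    rcases a1.eq_or_lt with h0 | h0
    · left; exact h0.symm
    right
    have htT : t < T := a2.trans_lt ht0.2
    have hsd : HasFDerivAt (fun p : ℝ × ℝ => (p.1 + d, p.2))
        ((ContinuousLinearMap.fst ℝ ℝ ℝ).prod (ContinuousLinearMap.snd ℝ ℝ ℝ)) (x, t) :=
      (hasFDerivAt_fst.add_const d).prodMk hasFDerivAt_snd
    have hS2 := (h.dS (x + d, t) h0 htT).comp (x, t) hsd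
    refine ⟨(psc κ m S R (x, t), 1), _,
      ((db (x, t) h0 htT).mul ((hS2.sub (h.dS (x, t) h0 htT)).mul_const d⁻¹)).sub
        (hasFDerivAt_snd.const_mul (2 * ε)), ?_, t, h0, ?_⟩
    · obtain ⟨ξ₁, u1, u2, u3⟩ := mv S Sx h.dSx x t hpD.2
      obtain ⟨ξ₂, v1, v2, v3⟩ := mv (fun p => κ * b p ^ 2) Cx dCx x t hpD.2
      have m0 : x ∈ Icc α β := ⟨hxx.1, by linarith⟩
      have m1 : ξ₁ ∈ Icc α β := ⟨by linarith [hxx.1], by linarith⟩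
      have m2 : ξ₂ ∈ Icc α β := ⟨by linarith [hxx.1], by linarith⟩
      have m3 : x + d ∈ Icc α β := ⟨by linarith [hxx.1], by linarith⟩
      have := H1 x m0 t ⟨a1, a2⟩ ξ₁ m1 ξ₂ m2 (x + d) m3 (by rw [abs_lt]; constructor <;> linarith)
        (by rw [abs_lt]; constructor <;> linarith) (by rw [abs_lt]; constructor <;> linarith)
      have hdiag : E (x, t, x, x, x) ≤ 0 := by
        have : E (x, t, x, x, x) = - (b' (x, t) * κ * (b (x, t) * Sx (x, t)) ^ 2) := by
          simp only [hE, hCx]; ring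
        rw [this, neg_nonpos]
        exact mul_nonneg (mul_nonneg (hbn _ hpD) hk.le) (sq_nonneg _)
      have hEl : E (x, t, ξ₁, ξ₂, x + d) < ε := by
        have := (abs_lt.1 this).2; linarith
      have hEv : E (x, t, ξ₁, ξ₂, x + d) = - b' (x, t) * (κ * b (x, t) ^ 2) * Rx (x, t) *
          ((S (x + d, t) - S (x, t)) * d⁻¹)
          - b (x, t) * ((κ * b (x + d, t) ^ 2 - κ * b (x, t) ^ 2) * d⁻¹) * Sx (x + d, t) := by
        rw [u3, v3, hE]; field_simp
      rw [hEv] at hEl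
      simp [hpsc]
      ring_nf at hEl ⊢
      linarith
    · intro δ hδ hδ'
      exact psTri_back hp (h.c_nonneg _) (hL _ hpD) δ hδ hδ'

theorem ps_eta_deriv (K₁ γ : ℝ) (hγ₁ : 1 < γ) (v : ℝ) (hv : 0 < v) :
    HasDerivAt (etaP K₁ γ) (-soundP K₁ γ v) v := by
  have h := (Real.hasDerivAt_rpow_const (x := v) (p := -(γ - 1) / 2) (Or.inl hv.ne')).const_mul
    (2 * Real.sqrt (K₁ * γ) / (γ - 1))
  refine h.congr_deriv ?_
  have h1 : γ - 1 ≠ 0 := by linarith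
  have h2 : -(γ - 1) / 2 - 1 = -(γ + 1) / 2 := by ring
  rw [soundP, h2]
  field_simp

theorem ps_eta_pos (K₁ γ : ℝ) (hK₁ : 0 < K₁) (hγ₁ : 1 < γ) (v : ℝ) (hv : 0 < v) :
    0 < etaP K₁ γ v := by
  have : 0 < γ - 1 := by linarith
  rw [etaP]; positivity

theorem ps_eta_pow (K₁ γ : ℝ) (hK₁ : 0 < K₁) (hγ₁ : 1 < γ) (v : ℝ) (hv : 0 < v) :
    etaP K₁ γ v ^ ((γ + 1) / (2 * (γ - 1)))
      = (2 * Real.sqrt (K₁ * γ) / (γ - 1)) ^ ((γ + 1) / (2 * (γ - 1))) * v ^ (-(γ + 1) / 4) := by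
  have h0 : 0 < γ - 1 := by linarith
  have h1 : γ - 1 ≠ 0 := by linarith
  rw [etaP, Real.mul_rpow (by positivity) (by positivity), ← Real.rpow_mul hv.le]
  congr 2
  field_simp
  norm_num

theorem ps_sound_eq (K₁ γ : ℝ) (hK₁ : 0 < K₁) (hγ₁ : 1 < γ) (v : ℝ) (hv : 0 < v) :
    Real.sqrt (K₁ * γ) / ((2 * Real.sqrt (K₁ * γ) / (γ - 1)) ^ ((γ + 1) / (2 * (γ - 1)))) ^ 2
      * (etaP K₁ γ v ^ ((γ + 1) / (2 * (γ - 1)))) ^ 2 = soundP K₁ γ v := by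
  have h0 : 0 < γ - 1 := by linarith
  have hC : 0 < (2 * Real.sqrt (K₁ * γ) / (γ - 1)) ^ ((γ + 1) / (2 * (γ - 1))) := by positivity
  rw [ps_eta_pow K₁ γ hK₁ hγ₁ v hv, soundP, mul_pow, ← Real.rpow_natCast (v ^ (-(γ + 1) / 4)) 2,
    ← Real.rpow_mul hv.le]
  have h2 : -(γ + 1) / 4 * ((2 : ℕ) : ℝ) = -(γ + 1) / 2 := by push_cast; ring
  rw [h2]
  field_simp

theorem ps_K0 (K₁ γ : ℝ) (hK₁ : 0 < K₁) (hγ₁ : 1 < γ) :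
    (K₁ * γ) ^ (-(1 : ℝ) / 4) * Real.sqrt (KcP K₁ γ)
      = ((2 * Real.sqrt (K₁ * γ) / (γ - 1)) ^ ((γ + 1) / (2 * (γ - 1))))⁻¹ := by
  have h0 : 0 < γ - 1 := by linarith
  have h1 : γ - 1 ≠ 0 := by linarith
  have hkg : 0 < K₁ * γ := by positivity
  have hC : 0 < 2 * Real.sqrt (K₁ * γ) / (γ - 1) := by positivity
  rw [KcP, KtauP, ← Real.rpow_mul hC.le, Real.sqrt_mul (Real.sqrt_nonneg _)]
  rw [Real.sqrt_eq_rpow ((2 * Real.sqrt (K₁ * γ) / (γ - 1)) ^ _), ← Real.rpow_mul hC.le,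
    ← Real.rpow_neg hC.le]
  rw [Real.sqrt_eq_rpow (Real.sqrt _), Real.sqrt_eq_rpow (K₁ * γ), ← Real.rpow_mul hkg.le, ← mul_assoc,
    ← Real.rpow_add hkg]
  have h3 : -(1 : ℝ) / 4 + 1 / 2 * (1 / 2) = 0 := by norm_num
  rw [h3, Real.rpow_zero, one_mul]
  congr 1
  field_simp

theorem ps_slice {T : ℝ} {f : ℝ → ℝ → ℝ}
    (hf : ContDiffOn ℝ 1 (fun p : ℝ × ℝ => f p.1 p.2) (psD T)) :
    ∃ fx : ℝ × ℝ → ℝ, ContinuousOn fx (psD T) ∧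
      (∀ x, ∀ t ∈ Ico 0 T, HasDerivAt (fun x' => f x' t) (fx (x, t)) x) ∧
      (∀ p : ℝ × ℝ, 0 < p.2 → p.2 < T → ∃ ft, HasFDerivAt (fun p : ℝ × ℝ => f p.1 p.2)
        (fx p • ContinuousLinearMap.fst ℝ ℝ ℝ + ft • ContinuousLinearMap.snd ℝ ℝ ℝ) p ∧
        HasDerivAt (fun t' => f p.1 t') ft p.2) := by
  have hu : UniqueDiffOn ℝ (psD T) := uniqueDiffOn_univ.prod (uniqueDiffOn_Ico 0 T)
  have hx : ∀ x, ∀ t ∈ Ico 0 T, HasDerivAt (fun x' => f x' t)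
      (fderivWithin ℝ (fun p : ℝ × ℝ => f p.1 p.2) (psD T) (x, t) (1, 0)) x := by
    intro x t ht
    have h1 := ((hf.differentiableOn one_ne_zero) (x, t) ⟨trivial, ht⟩).hasFDerivWithinAt
    have h2 : HasDerivWithinAt (fun x' : ℝ => (x', t)) (1, 0) univ x :=
      ((hasDerivAt_id x).prodMk (hasDerivAt_const x t)).hasDerivWithinAt
    have hmp : MapsTo (fun x' : ℝ => (x', t)) univ (psD T) := fun x' _ => ⟨trivial, ht⟩
    have := h1.comp_hasDerivWithinAt x h2 hmp
    rw [hasDerivWithinAt_univ] at this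
    exact this
  refine ⟨fun p => fderivWithin ℝ (fun p : ℝ × ℝ => f p.1 p.2) (psD T) p (1, 0),
    (hf.continuousOn_fderivWithin hu le_rfl).clm_apply continuousOn_const, hx, ?_⟩
  rintro ⟨x, t⟩ h1 h2
  simp only at h1 h2
  have hn : psD T ∈ nhds (x, t) := prod_mem_nhds univ_mem (Ico_mem_nhds h1 h2)
  have hd := ((hf.differentiableOn one_ne_zero) (x, t) ⟨trivial, h1.le, h2⟩).hasFDerivWithinAt.hasFDerivAt hn
  set A := fderivWithin ℝ (fun p : ℝ × ℝ => f p.1 p.2) (psD T) (x, t) with hA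
  refine ⟨A (0, 1), hd.congr_fderiv ?_, ?_⟩
  · ext <;> simp [hA]
  · have h2 : HasDerivAt (fun t' : ℝ => (x, t')) (0, 1) t :=
      (hasDerivAt_const t x).prodMk (hasDerivAt_id t)
    exact hd.comp_hasDerivAt t h2

/-- Lemma 2.4: for `1 < γ < 3`, any `C¹` solution of the p-system on `ℝ × [0,T)` with
initial data satisfying Assumption A obeys the time-dependent upper bound on the specific
volume `τ(x,t) ≤ [τ₀(x)^{(3−γ)/4} + K₀ (Y+Q) t]^{4/(3−γ)}`, with
`K₀ = ((3−γ)/8)(K₁γ)^{−1/4} √K_c`. -/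
theorem psystem_density_lower_bound
    (K₁ γ T M₁ M₂ : ℝ) (hK₁ : 0 < K₁) (hγ₁ : 1 < γ) (hγ₃ : γ < 3) (hT : 0 < T)
    (τ₀ u₀ : ℝ → ℝ) (hA : AssumptionA M₁ M₂ τ₀ u₀)
    (τ u : ℝ → ℝ → ℝ) (hsol : PSysSol K₁ γ (Set.Ico 0 T) 1 τ u)
    (hτ0 : ∀ x, τ x 0 = τ₀ x) (hu0 : ∀ x, u x 0 = u₀ x)
    (y q : ℝ → ℝ → ℝ)
    (hy : ∀ x t, y x t = etaP K₁ γ (τ x t) ^ ((γ + 1) / (2 * (γ - 1)))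
        * deriv (fun x' => u x' t + etaP K₁ γ (τ x' t)) x)
    (hq : ∀ x t, q x t = etaP K₁ γ (τ x t) ^ ((γ + 1) / (2 * (γ - 1)))
        * deriv (fun x' => u x' t - etaP K₁ γ (τ x' t)) x) :
    ∀ x : ℝ, ∀ t ∈ Set.Ico 0 T,
      τ x t ≤ (τ₀ x ^ ((3 - γ) / 4)
        + (3 - γ) / 8 * (K₁ * γ) ^ (-(1 : ℝ) / 4) * Real.sqrt (KcP K₁ γ)
          * (max 0 (⨆ x', y x' 0) + max 0 (⨆ x', q x' 0)) * t) ^ (4 / (3 - γ)) := by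
  obtain ⟨hpos, hτc, huc, he1, he2⟩ := hsol
  obtain ⟨hA1, hA2, hM1, hM2, hAb, hAl⟩ := hA
  have hg0 : 0 < γ - 1 := by linarith
  obtain ⟨m, hm⟩ : ∃ m, m = (γ + 1) / (2 * (γ - 1)) := ⟨_, rfl⟩
  have hm0 : 0 < m := by rw [hm]; positivity
  obtain ⟨A, hAdef⟩ : ∃ A, A = (2 * Real.sqrt (K₁ * γ) / (γ - 1)) ^ m := ⟨_, rfl⟩
  have hA0 : 0 < A := by rw [hAdef]; positivity
  obtain ⟨TX, cTX, dTX, fTX⟩ := ps_slice (T := T) (f := τ) hτc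
  obtain ⟨UX, cUX, dUX, fUX⟩ := ps_slice (T := T) (f := u) huc
  have hτcont : ContinuousOn (fun p : ℝ × ℝ => τ p.1 p.2) (psD T) := hτc.continuousOn
  have hucont : ContinuousOn (fun p : ℝ × ℝ => u p.1 p.2) (psD T) := huc.continuousOn
  have hposD : ∀ p ∈ psD T, 0 < τ p.1 p.2 := fun p hp => hpos _ _ hp.2
  have cη : ContinuousOn (fun p : ℝ × ℝ => etaP K₁ γ (τ p.1 p.2)) (psD T) :=
    continuousOn_const.mul (hτcont.rpow_const fun p hp => Or.inl (hposD p hp).ne')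
  have cc : ContinuousOn (fun p : ℝ × ℝ => soundP K₁ γ (τ p.1 p.2)) (psD T) :=
    continuousOn_const.mul (hτcont.rpow_const fun p hp => Or.inl (hposD p hp).ne')
  have dη : ∀ x, ∀ t ∈ Ico 0 T, HasDerivAt (fun x' => etaP K₁ γ (τ x' t))
      (-soundP K₁ γ (τ x t) * TX (x, t)) x := fun x t ht =>
    HasDerivAt.comp (h := fun x' => τ x' t) (h₂ := etaP K₁ γ) x
      (ps_eta_deriv K₁ γ hγ₁ (τ x t) (hpos x t ht)) (dTX x t ht)
  have hSx : ∀ x, ∀ t ∈ Ico 0 T, HasDerivAt (fun x' => u x' t + etaP K₁ γ (τ x' t))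
      (UX (x, t) - soundP K₁ γ (τ x t) * TX (x, t)) x := fun x t ht =>
    ((dUX x t ht).add (dη x t ht)).congr_deriv (by ring)
  have hRx : ∀ x, ∀ t ∈ Ico 0 T, HasDerivAt (fun x' => u x' t - etaP K₁ γ (τ x' t))
      (UX (x, t) + soundP K₁ γ (τ x t) * TX (x, t)) x := fun x t ht =>
    ((dUX x t ht).sub (dη x t ht)).congr_deriv (by ring)
  have hhalf : ∀ p : ℝ × ℝ, ((u p.1 p.2 + etaP K₁ γ (τ p.1 p.2)) - (u p.1 p.2 - etaP K₁ γ (τ p.1 p.2))) / 2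
      = etaP K₁ γ (τ p.1 p.2) := fun p => by ring
  have hpsc : ∀ p ∈ psD T, psc (Real.sqrt (K₁ * γ) / A ^ 2) m
      (fun p => u p.1 p.2 + etaP K₁ γ (τ p.1 p.2)) (fun p => u p.1 p.2 - etaP K₁ γ (τ p.1 p.2)) p
      = soundP K₁ γ (τ p.1 p.2) := by
    intro p hp
    simp only [psc]
    rw [hhalf, hAdef, hm]
    exact ps_sound_eq K₁ γ hK₁ hγ₁ _ (hposD p hp)
  -- equations at interior points
  have hft : ∀ x t, 0 < t → t < T →
      HasFDerivAt (fun p : ℝ × ℝ => τ p.1 p.2) (TX (x, t) • ContinuousLinearMap.fst ℝ ℝ ℝ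
        + UX (x, t) • ContinuousLinearMap.snd ℝ ℝ ℝ) (x, t) ∧
      HasDerivAt (fun t' => τ x t') (UX (x, t)) t ∧
      HasFDerivAt (fun p : ℝ × ℝ => u p.1 p.2) (UX (x, t) • ContinuousLinearMap.fst ℝ ℝ ℝ
        + (soundP K₁ γ (τ x t) ^ 2 * TX (x, t)) • ContinuousLinearMap.snd ℝ ℝ ℝ) (x, t) := by
    intro x t h1 h2
    obtain ⟨a, ha, ha'⟩ := fTX (x, t) h1 h2
    obtain ⟨b, hb, hb'⟩ := fUX (x, t) h1 h2
    have ht : t ∈ Ico 0 T := ⟨h1.le, h2⟩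
    have hp := hpos x t ht
    have e1 := he1 x t ht
    have e2 := he2 x t ht
    simp only at ha' hb'
    rw [ha'.deriv, (dUX x t ht).deriv] at e1
    have d2 := ((dTX x t ht).rpow_const (p := -γ) (Or.inl hp.ne')).const_mul K₁
    rw [hb'.deriv, d2.deriv] at e2
    have hs : soundP K₁ γ (τ x t) ^ 2 = K₁ * γ * τ x t ^ (-γ - 1) := by
      rw [soundP, mul_pow, Real.sq_sqrt (by positivity), ← Real.rpow_natCast, ← Real.rpow_mul hp.le]
      congr 2
      push_cast; ring
    have ea : a = UX (x, t) := by linarith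
    have eb : b = soundP K₁ γ (τ x t) ^ 2 * TX (x, t) := by
      rw [hs]; linarith
    rw [ea] at ha ha'
    rw [eb] at hb
    exact ⟨ha, ha', hb⟩
  have hfη : ∀ x t, 0 < t → t < T →
      HasFDerivAt (fun p : ℝ × ℝ => etaP K₁ γ (τ p.1 p.2)) ((-soundP K₁ γ (τ x t)) •
        (TX (x, t) • ContinuousLinearMap.fst ℝ ℝ ℝ + UX (x, t) • ContinuousLinearMap.snd ℝ ℝ ℝ)) (x, t) := by
    intro x t h1 h2
    have := HasDerivAt.comp_hasFDerivAt (f := fun p : ℝ × ℝ => τ p.1 p.2) (h₂ := etaP K₁ γ) (x, t)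
      (ps_eta_deriv K₁ γ hγ₁ (τ x t) (hpos x t ⟨h1.le, h2⟩)) (hft x t h1 h2).1
    exact this
  have h0T : (0 : ℝ) ∈ Ico 0 T := ⟨le_rfl, hT⟩
  have hηb : ∀ x, etaP K₁ γ (τ x 0) ≤ etaP K₁ γ M₂ := by
    intro x
    rw [etaP, etaP, hτ0]
    have := Real.rpow_le_rpow_of_nonpos hM2 (hAl x) (show -(γ - 1) / 2 ≤ 0 by linarith)
    gcongr
  have hcb : ∀ x, soundP K₁ γ (τ x 0) ≤ soundP K₁ γ M₂ := by
    intro x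
    rw [soundP, soundP, hτ0]
    have := Real.rpow_le_rpow_of_nonpos hM2 (hAl x) (show -(γ + 1) / 2 ≤ 0 by linarith)
    gcongr
  have hηp : ∀ x, ∀ t ∈ Ico 0 T, 0 < etaP K₁ γ (τ x t) := fun x t ht =>
    ps_eta_pos K₁ γ hK₁ hγ₁ _ (hpos x t ht)
  have hub : ∀ x, |u x 0| ≤ M₁ := by
    intro x
    rw [hu0]
    linarith [hAb x, abs_nonneg (τ₀ x), abs_nonneg (deriv τ₀ x), abs_nonneg (deriv u₀ x)]
  have hUb : ∀ x, |UX (x, 0)| ≤ M₁ := by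
    intro x
    have : UX (x, 0) = deriv u₀ x := by
      have := (dUX x 0 h0T).deriv
      simp only [hu0] at this
      exact this.symm
    rw [this]
    linarith [hAb x, abs_nonneg (τ₀ x), abs_nonneg (deriv τ₀ x), abs_nonneg (u₀ x)]
  have hTb : ∀ x, |TX (x, 0)| ≤ M₁ := by
    intro x
    have : TX (x, 0) = deriv τ₀ x := by
      have := (dTX x 0 h0T).deriv
      simp only [hτ0] at this
      exact this.symm
    rw [this]
    linarith [hAb x, abs_nonneg (τ₀ x), abs_nonneg (deriv u₀ x), abs_nonneg (u₀ x)]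
  have hsys : PsSys (Real.sqrt (K₁ * γ) / A ^ 2) m T
      (fun p => u p.1 p.2 + etaP K₁ γ (τ p.1 p.2)) (fun p => u p.1 p.2 - etaP K₁ γ (τ p.1 p.2))
      (fun p => UX p - soundP K₁ γ (τ p.1 p.2) * TX p)
      (fun p => UX p + soundP K₁ γ (τ p.1 p.2) * TX p) := by
    refine ⟨by positivity, hm0, ?_, hucont.add cη, hucont.sub cη, cUX.sub (cc.mul cTX),
      cUX.add (cc.mul cTX), hSx, hRx, ?_, ?_, ?_, ?_⟩
    · intro p hp
      have := hηp p.1 p.2 hp.2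
      linarith
    · rintro ⟨x, t⟩ h1 h2
      rw [hpsc (x, t) ⟨trivial, h1.le, h2⟩]
      refine ((hft x t h1 h2).2.2.add (hfη x t h1 h2)).congr_fderiv ?_
      ext <;> simp <;> ring
    · rintro ⟨x, t⟩ h1 h2
      rw [hpsc (x, t) ⟨trivial, h1.le, h2⟩]
      refine ((hft x t h1 h2).2.2.sub (hfη x t h1 h2)).congr_fderiv ?_
      ext <;> simp <;> ring
    · refine ⟨M₁ + etaP K₁ γ M₂, fun x => ?_⟩
      refine (abs_add_le _ _).trans (add_le_add (hub x) ?_)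
      rw [abs_of_pos (hηp x 0 h0T)]
      exact hηb x
    · refine ⟨M₁ + etaP K₁ γ M₂, fun x => ?_⟩
      refine (abs_sub _ _).trans (add_le_add (hub x) ?_)
      rw [abs_of_pos (hηp x 0 h0T)]
      exact hηb x
  have hy' : ∀ x, ∀ t ∈ Ico 0 T, y x t = etaP K₁ γ (τ x t) ^ m *
      (UX (x, t) - soundP K₁ γ (τ x t) * TX (x, t)) := fun x t ht => by
    rw [hy, (hSx x t ht).deriv, hm]
  have hq' : ∀ x, ∀ t ∈ Ico 0 T, q x t = etaP K₁ γ (τ x t) ^ m *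
      (UX (x, t) + soundP K₁ γ (τ x t) * TX (x, t)) := fun x t ht => by
    rw [hq, (hRx x t ht).deriv, hm]
  have hc0 : ∀ x, 0 ≤ soundP K₁ γ (τ x 0) := fun x =>
    mul_nonneg (Real.sqrt_nonneg _) (Real.rpow_nonneg (hpos x 0 h0T).le _)
  have hcT : ∀ x, |soundP K₁ γ (τ x 0) * TX (x, 0)| ≤ soundP K₁ γ M₂ * M₁ := by
    intro x
    rw [abs_mul, abs_of_nonneg (hc0 x)]
    exact mul_le_mul (hcb x) (hTb x) (abs_nonneg _) ((hc0 x).trans (hcb x))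
  have hbd : ∀ x w, w ≤ M₁ + soundP K₁ γ M₂ * M₁ → etaP K₁ γ (τ x 0) ^ m * w
      ≤ etaP K₁ γ M₂ ^ m * (M₁ + soundP K₁ γ M₂ * M₁) := by
    intro x w hw
    have hn : 0 ≤ M₁ + soundP K₁ γ M₂ * M₁ := by
      have := (hc0 x).trans (hcb x)
      positivity
    have h1 := (hηp x 0 h0T).le
    have h2 := hηb x
    calc etaP K₁ γ (τ x 0) ^ m * w ≤ etaP K₁ γ (τ x 0) ^ m * (M₁ + soundP K₁ γ M₂ * M₁) := by
          gcongr
      _ ≤ _ := by gcongr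
  have bddy : BddAbove (range fun x' => y x' 0) := by
    refine ⟨etaP K₁ γ M₂ ^ m * (M₁ + soundP K₁ γ M₂ * M₁), ?_⟩
    rintro _ ⟨x, rfl⟩
    simp only
    rw [hy' x 0 h0T]
    apply hbd
    have h1 := abs_le.1 (hcT x)
    have h2 := abs_le.1 (hUb x)
    linarith
  have bddq : BddAbove (range fun x' => q x' 0) := by
    refine ⟨etaP K₁ γ M₂ ^ m * (M₁ + soundP K₁ γ M₂ * M₁), ?_⟩
    rintro _ ⟨x, rfl⟩
    simp only
    rw [hq' x 0 h0T]
    apply hbd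
    have h1 := abs_le.1 (hcT x)
    have h2 := abs_le.1 (hUb x)
    linarith
  obtain ⟨Y, hYdef⟩ : ∃ Y, Y = max 0 (⨆ x', y x' 0) := ⟨_, rfl⟩
  obtain ⟨Q, hQdef⟩ : ∃ Q, Q = max 0 (⨆ x', q x' 0) := ⟨_, rfl⟩
  have hyY : ∀ x, ∀ t ∈ Ico 0 T, etaP K₁ γ (τ x t) ^ m *
      (UX (x, t) - soundP K₁ γ (τ x t) * TX (x, t)) ≤ Y := by
    intro x t ht
    have := hsys.y_bound Y ?_ (x, t) ⟨trivial, ht⟩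
    · rw [hhalf] at this
      exact this
    · intro x
      rw [hhalf (x, 0)]
      simp only
      rw [← hy' x 0 h0T, hYdef]
      exact le_max_of_le_right (le_ciSup bddy x)
  have hqQ : ∀ x, ∀ t ∈ Ico 0 T, etaP K₁ γ (τ x t) ^ m *
      (UX (x, t) + soundP K₁ γ (τ x t) * TX (x, t)) ≤ Q := by
    intro x t ht
    have hh : ∀ p : ℝ × ℝ, (-(u (-p.1) p.2 - etaP K₁ γ (τ (-p.1) p.2)) -
        -(u (-p.1) p.2 + etaP K₁ γ (τ (-p.1) p.2))) / 2 = etaP K₁ γ (τ (-p.1) p.2) := fun p => by ring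
    have := hsys.reflect.y_bound Q ?_ (-x, t) ⟨trivial, ht⟩
    · rw [hh (-x, t)] at this
      simpa only [neg_neg] using this
    · intro x
      rw [hh (x, 0)]
      simp only
      rw [← hq' (-x) 0 h0T, hQdef]
      exact le_max_of_le_right (le_ciSup bddq (-x))
  intro x t ht
  rw [← hYdef, ← hQdef]
  have hY0 : 0 ≤ Y := by rw [hYdef]; exact le_max_left _ _
  have hQ0 : 0 ≤ Q := by rw [hQdef]; exact le_max_left _ _
  have hK0 : (3 - γ) / 8 * (K₁ * γ) ^ (-(1 : ℝ) / 4) * Real.sqrt (KcP K₁ γ) = (3 - γ) / 8 * A⁻¹ := by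
    rw [mul_assoc, ps_K0 K₁ γ hK₁ hγ₁, hAdef, hm]
  rw [hK0]
  have hmain := Convex.image_sub_le_mul_sub_of_deriv_le (convex_Icc 0 t)
    (f := fun s => τ x s ^ ((3 - γ) / 4)) (C := (3 - γ) / 8 * A⁻¹ * (Y + Q)) ?_ ?_ ?_
    0 ⟨le_rfl, ht.1⟩ t ⟨ht.1, le_rfl⟩ ht.1
  · simp only [sub_zero] at hmain
    rw [hτ0] at hmain
    have hle : τ x t ^ ((3 - γ) / 4) ≤ τ₀ x ^ ((3 - γ) / 4) + (3 - γ) / 8 * A⁻¹ * (Y + Q) * t := by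
      linarith
    have hτp := hpos x t ht
    calc τ x t = (τ x t ^ ((3 - γ) / 4)) ^ (4 / (3 - γ)) := by
          have : (3 - γ) ≠ 0 := by linarith
          rw [← Real.rpow_mul hτp.le]
          have h1 : (3 - γ) / 4 * (4 / (3 - γ)) = 1 := by field_simp
          rw [h1, Real.rpow_one]
      _ ≤ _ := Real.rpow_le_rpow (Real.rpow_nonneg hτp.le _) hle
          (div_nonneg (by norm_num) (by linarith))
  · refine ContinuousOn.rpow_const ?_ fun s hs => Or.inl (hpos x s ⟨hs.1, hs.2.trans_lt ht.2⟩).ne'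
    exact hτcont.comp (f := fun s => (x, s)) (by fun_prop)
      (fun s hs => ⟨trivial, hs.1, hs.2.trans_lt ht.2⟩)
  · rw [interior_Icc]
    intro s hs
    have h2 := hs.2.trans ht.2
    exact ((hft x s hs.1 h2).2.1.rpow_const (Or.inl (hpos x s ⟨hs.1.le, h2⟩).ne')).differentiableAt.differentiableWithinAt
  · rw [interior_Icc]
    intro s hs
    have h2 := hs.2.trans ht.2
    have hsT : s ∈ Ico 0 T := ⟨hs.1.le, h2⟩
    rw [((hft x s hs.1 h2).2.1.rpow_const (Or.inl (hpos x s hsT).ne')).deriv]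
    have i1 := hyY x s hsT
    have i2 := hqQ x s hsT
    have hpow := ps_eta_pow K₁ γ hK₁ hγ₁ _ (hpos x s hsT)
    rw [← hm, ← hAdef] at hpow
    rw [hpow] at i1 i2
    have he : (3 - γ) / 4 - 1 = -(γ + 1) / 4 := by ring
    rw [he]
    have i3 : A * τ x s ^ (-(γ + 1) / 4) * UX (x, s) ≤ (Y + Q) / 2 := by linarith
    have i4 : τ x s ^ (-(γ + 1) / 4) * UX (x, s) ≤ A⁻¹ * ((Y + Q) / 2) := by
      rw [inv_mul_eq_div, le_div_iff₀ hA0]; linarith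
    have i5 := mul_le_mul_of_nonneg_left i4 (show 0 ≤ (3 - γ) / 4 by linarith)
    linarith
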